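/- Let X be a principal (Alexandrov-discrete) topological space, i.e., one in which arbitrary intersections of open sets are open. Then X is pre-Hausdorff if and only if X is zero-dimensional, i.e., X has a basis consisting of clopen sets. -/

import Mathlib

/-- `x` and `y` admit a T₀ separation: some open set contains one of them but not the other. -/
def T0Sep {X : Type*} [TopologicalSpace X] (x y : X) : Prop :=
  ∃ U : Set X, IsOpen U ∧ ((x ∈ U ∧ y ∉ U) ∨ (y ∈ U ∧ x ∉ U))

/-- `x` and `y` admit a T₂ separation: disjoint open sets around them. -/
def T2Sep {X : Type*} [TopologicalSpace X] (x y : X) : Prop :=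
  ∃ U V : Set X, IsOpen U ∧ IsOpen V ∧ x ∈ U ∧ y ∈ V ∧ U ∩ V = ∅

/-- A space is pre-Hausdorff (T₀,₂) if every T₀-separated pair is T₂-separated. -/
def PreHausdorff (X : Type*) [TopologicalSpace X] : Prop :=
  ∀ x y : X, T0Sep x y → T2Sep x y

/-- A space is principal (Alexandrov-discrete) if arbitrary intersections of open sets
are open. -/
def IsPrincipal (X : Type*) [TopologicalSpace X] : Prop :=
  ∀ S : Set (Set X), (∀ U ∈ S, IsOpen U) → IsOpen (⋂₀ S)

/-- A space is zero-dimensional if it has a basis of clopen sets. -/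
def IsZeroDimensional (X : Type*) [TopologicalSpace X] : Prop :=
  ∃ B : Set (Set X), (∀ b ∈ B, IsClopen b) ∧ TopologicalSpace.IsTopologicalBasis B

section

open Topology TopologicalSpace

variable {X : Type*} [TopologicalSpace X] {x y : X} {s : Set X}

theorem t0Sep_iff_not_inseparable : T0Sep x y ↔ ¬Inseparable x y :=
  not_inseparable_iff_exists_open.symm

theorem t2Sep_iff_disjoint_nhds : T2Sep x y ↔ Disjoint (𝓝 x) (𝓝 y) := by
  simp only [T2Sep, (nhds_basis_opens x).disjoint_iff (nhds_basis_opens y),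
    Set.disjoint_iff_inter_eq_empty]
  grind

theorem preHausdorff_iff_r1Space : PreHausdorff X ↔ R1Space X := by
  simp only [PreHausdorff, t0Sep_iff_not_inseparable, t2Sep_iff_disjoint_nhds,
    r1Space_iff_inseparable_or_disjoint_nhds, or_iff_not_imp_left]

theorem isPrincipal_iff_alexandrovDiscrete : IsPrincipal X ↔ AlexandrovDiscrete X :=
  (alexandrovDiscrete_iff X).symm

theorem isZeroDimensional_iff_isTopologicalBasis_isClopen :
    IsZeroDimensional X ↔ IsTopologicalBasis {s : Set X | IsClopen s} where
  mp := fun ⟨_, hclopen, hbasis⟩ ↦ hbasis.of_isOpen_of_subset (fun _ h ↦ h.isOpen) hclopen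
  mpr h := ⟨_, fun _ hs ↦ hs, h⟩

theorem IsZeroDimensional.r1Space (h : IsZeroDimensional X) : R1Space X :=
  have : CompletelyRegularSpace X := .of_isTopologicalBasis_clopens
    (isZeroDimensional_iff_isTopologicalBasis_isClopen.mp h)
  inferInstance

/- In an Alexandrov-discrete space the open sets are those stable under generalization, and in an
R₀ space generalization and specialization coincide. -/
theorem isClopen_of_isOpen_of_r0Space [AlexandrovDiscrete X] [R0Space X] (hs : IsOpen s) :
    IsClopen s := by
  have hcompl : IsOpen sᶜ := isOpen_iff_forall_specializes.mpr
    fun _ _ hxy hy hx ↦ hy (hxy.symm.mem_open hs hx)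
  exact ⟨isOpen_compl_iff.mp hcompl, hs⟩

theorem isZeroDimensional_of_r0Space [AlexandrovDiscrete X] [R0Space X] : IsZeroDimensional X :=
  ⟨{s | IsOpen s}, fun _ ↦ isClopen_of_isOpen_of_r0Space, isTopologicalBasis_opens⟩

end

/-- A principal space is pre-Hausdorff iff it is zero-dimensional. -/
theorem principal_preHausdorff_iff_zeroDim (X : Type*) [TopologicalSpace X]
    (hX : IsPrincipal X) : PreHausdorff X ↔ IsZeroDimensional X := by
  have : AlexandrovDiscrete X := isPrincipal_iff_alexandrovDiscrete.mp hX
  rw [preHausdorff_iff_r1Space]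
  exact ⟨fun _ ↦ isZeroDimensional_of_r0Space, IsZeroDimensional.r1Space⟩
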